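/- arXiv:0805.4801 — 2 statements merged into one kernel-verified Lean document; each statement's English description precedes it below -/
import Mathlib

section
/- For every integer n ≥ 4 there exist a unital C*-algebra A and an n×n magic unitary u = (u_ij) over A such that the entries u_ij do not all commute and the C*-subalgebra of A generated by the entries u_ij is infinite-dimensional. -/
/-- A witness for Statement 3: a unital C*-algebra `A` together with an `n × n`
magic unitary over `A` whose entries do not all commute, and such that the
C*-subalgebra of `A` generated by the entries (the topological closure of the
star subalgebra they generate) is infinite-dimensional. -/
structure NoncommutativeMagicUnitaryWitness (n : ℕ) where
  A : Type
  [inst : CStarAlgebra A]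
  u : Fin n → Fin n → A
  proj : ∀ i j, star (u i j) = u i j ∧ u i j * u i j = u i j
  rows : ∀ i, ∑ j, u i j = 1
  cols : ∀ j, ∑ i, u i j = 1
  noncomm : ¬ ∀ i j k l, Commute (u i j) (u k l)
  infdim : ¬ FiniteDimensional ℂ
    ((StarAlgebra.adjoin ℂ {x : A | ∃ i j, x = u i j}).topologicalClosure)

/-!
Any two projections `p` and `q` occur as entries of an `n × n` magic unitary, namely the block sum
of `!![p, 1 - p; 1 - p, p]`, `!![q, 1 - q; 1 - q, q]` and an identity matrix. If `p * q * p` is not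
integral over `ℂ`, then `p` and `q` do not commute, since otherwise `p * q * p = p * q` would be
idempotent, and no finite-dimensional subalgebra contains both.

Such `p` and `q` exist in the `2 × 2` matrices over `C([0, 1], ℂ)`: take for `p` the constant
projection onto the first coordinate axis and for `q` the projection that is, at `t`, onto the line
spanned by `(√t, √(1 - t))`. The only nonzero entry of `p * q * p` is then the coordinate function
`t`, whose spectrum is the whole interval.
-/

open Matrix unitInterval
open scoped ComplexOrder

section MagicUnitary

variable {R ι κ : Type*} [Fintype ι] [Fintype κ]

/-- A *magic unitary*: a square matrix of projections whose rows and columns all sum to `1`. The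
index type is arbitrary, so that block sums can be indexed by a disjoint union. -/
structure IsMagicUnitary [NonAssocSemiring R] [Star R] (u : Matrix ι ι R) : Prop where
  isStarProjection : ∀ i j, IsStarProjection (u i j)
  sum_row : ∀ i, ∑ j, u i j = 1
  sum_col : ∀ j, ∑ i, u i j = 1

namespace IsMagicUnitary

theorem one [NonAssocSemiring R] [StarRing R] [DecidableEq ι] :
    IsMagicUnitary (1 : Matrix ι ι R) where
  isStarProjection i j := by
    rw [one_apply]
    split_ifs
    exacts [.one R, .zero R]
  sum_row i := by simp [one_apply]
  sum_col j := by simp [one_apply]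

theorem fromBlocks [NonAssocSemiring R] [StarRing R] {u : Matrix ι ι R} {v : Matrix κ κ R}
    (hu : IsMagicUnitary u) (hv : IsMagicUnitary v) :
    IsMagicUnitary (Matrix.fromBlocks u 0 0 v) where
  isStarProjection := by
    rintro (i | i) (j | j)
    exacts [hu.isStarProjection i j, .zero R, .zero R, hv.isStarProjection i j]
  sum_row := by rintro (i | i) <;> simp [hu.sum_row, hv.sum_row]
  sum_col := by rintro (j | j) <;> simp [hu.sum_col, hv.sum_col]

theorem submatrix_equiv [NonAssocSemiring R] [Star R] {u : Matrix ι ι R}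
    (hu : IsMagicUnitary u) (e : κ ≃ ι) : IsMagicUnitary (u.submatrix e e) where
  isStarProjection i j := hu.isStarProjection (e i) (e j)
  sum_row i := (e.sum_comp (u (e i))).trans (hu.sum_row (e i))
  sum_col j := (e.sum_comp fun i => u i (e j)).trans (hu.sum_col (e j))

theorem of_isStarProjection [NonAssocRing R] [StarRing R] {p : R}
    (hp : IsStarProjection p) : IsMagicUnitary !![p, 1 - p; 1 - p, p] where
  isStarProjection i j := by
    fin_cases i <;> fin_cases j
    exacts [hp, hp.one_sub, hp.one_sub, hp]
  sum_row i := by fin_cases i <;> simp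
  sum_col j := by fin_cases j <;> simp

end IsMagicUnitary

theorem exists_isMagicUnitary_apply_eq [NonAssocRing R] [StarRing R] {p q : R}
    (hp : IsStarProjection p) (hq : IsStarProjection q) (hι : 4 ≤ Fintype.card ι) :
    ∃ u : Matrix ι ι R, IsMagicUnitary u ∧ (∃ i j, u i j = p) ∧ ∃ i j, u i j = q := by
  have hcard : Fintype.card ι =
      Fintype.card ((Fin 2 ⊕ Fin 2) ⊕ Fin (Fintype.card ι - 4)) := by
    simp only [Fintype.card_sum, Fintype.card_fin]
    omega
  let e := Fintype.equivOfCardEq hcard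
  have hpq := (IsMagicUnitary.of_isStarProjection hp).fromBlocks (.of_isStarProjection hq)
  have hu := (hpq.fromBlocks .one).submatrix_equiv e
  refine ⟨_, hu, ⟨e.symm (.inl (.inl 0)), e.symm (.inl (.inl 0)), ?_⟩,
    ⟨e.symm (.inl (.inr 0)), e.symm (.inl (.inr 0)), ?_⟩⟩ <;> simp

end MagicUnitary

section Integral

variable {R A : Type*} [CommRing R] [Ring A] [Algebra R A]

theorem isIntegral_of_isIdempotentElem {e : A} (he : IsIdempotentElem e) : IsIntegral R e :=
  ⟨.X ^ 2 - .X, Polynomial.monic_X_pow_sub (Polynomial.degree_X_le.trans_lt (by norm_num)),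
    by simp [pow_two, he.eq]⟩

theorem not_commute_of_not_isIntegral_mul_mul {p q : A} (hp : IsIdempotentElem p)
    (hq : IsIdempotentElem q) (hpq : ¬ IsIntegral R (p * q * p)) : ¬ Commute p q := by
  intro hcomm
  have hpqp : p * q * p = p * q := by rw [mul_assoc, ← hcomm.eq, ← mul_assoc, hp.eq]
  rw [hpqp] at hpq
  exact hpq (isIntegral_of_isIdempotentElem (hp.mul_of_commute hcomm hq))

theorem isIntegral_of_mem_of_finite [StarRing R] [StarRing A] [StarModule R A]
    (S : StarSubalgebra R A) [Module.Finite R S] {x : A} (hx : x ∈ S) : IsIntegral R x :=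
  (IsIntegral.of_finite R (⟨x, hx⟩ : S)).map S.subtype

theorem finite_spectrum_of_isIntegral {𝕜 B : Type*} [Field 𝕜] [Ring B] [Algebra 𝕜 B] {a : B}
    (ha : IsIntegral 𝕜 a) : (spectrum 𝕜 a).Finite := by
  nontriviality B
  refine ((minpoly 𝕜 a).rootSet_finite 𝕜).subset fun z hz => ?_
  have hmem := spectrum.subset_polynomial_aeval a (minpoly 𝕜 a) (Set.mem_image_of_mem _ hz)
  rw [minpoly.aeval, spectrum.zero_eq, Set.mem_singleton_iff] at hmem
  exact Polynomial.mem_rootSet.2 ⟨minpoly.ne_zero ha, by simpa using hmem⟩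

end Integral

section RankOneProjection

variable {n R : Type*} [Fintype n] [Semiring R] [StarRing R]

theorem isStarProjection_single_one [DecidableEq n] (i : n) :
    IsStarProjection (single i i (1 : R)) where
  isIdempotentElem := by simp [IsIdempotentElem]
  isSelfAdjoint := by simp [isSelfAdjoint_iff, star_eq_conjTranspose]

theorem isStarProjection_vecMulVec_star {v : n → R} (hv : star v ⬝ᵥ v = 1) :
    IsStarProjection (vecMulVec v (star v)) where
  isIdempotentElem := by rw [IsIdempotentElem, vecMulVec_mul_vecMulVec, hv, one_smul]
  isSelfAdjoint := by
    rw [isSelfAdjoint_iff, star_eq_conjTranspose, conjTranspose_vecMulVec, star_star]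

end RankOneProjection

theorem isIntegral_of_isIntegral_single {n 𝕜 R : Type*} [Fintype n] [DecidableEq n] [CommRing 𝕜]
    [Ring R] [Algebra 𝕜 R] {i : n} {a : R} (h : IsIntegral 𝕜 (single i i a)) :
    IsIntegral 𝕜 a := by
  rw [← diagonal_single] at h
  have hpi : IsIntegral 𝕜 (Pi.single i a : n → R) :=
    (isIntegral_algHom_iff (diagonalAlgHom 𝕜) diagonal_injective).1 h
  simpa using hpi.map (Pi.evalAlgHom 𝕜 (fun _ => R) i)

/-- The curve `t ↦ (√t, √(1 - t))` of unit vectors in `ℂ²`, as a vector of functions. It is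
parametrised so that the squared modulus of its first coordinate is the coordinate `t` itself. -/
noncomputable def unitVectorCurve : Fin 2 → C(I, ℂ) :=
  ![⟨fun t => (√(t : ℝ) : ℂ), by fun_prop⟩, ⟨fun t => (√(1 - t : ℝ) : ℂ), by fun_prop⟩]

theorem unitVectorCurve_zero_mul_star_apply (t : I) :
    (unitVectorCurve 0 * star (unitVectorCurve 0)) t = ((t : ℝ) : ℂ) := by
  simp [unitVectorCurve, ← Complex.ofReal_mul, Real.mul_self_sqrt t.2.1]

theorem star_unitVectorCurve_dotProduct_self : star unitVectorCurve ⬝ᵥ unitVectorCurve = 1 := by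
  ext t
  simp [dotProduct, unitVectorCurve, ← Complex.ofReal_mul, Real.mul_self_sqrt t.2.1,
    Real.mul_self_sqrt (sub_nonneg.2 t.2.2)]

theorem not_isIntegral_unitVectorCurve_zero_mul_star :
    ¬ IsIntegral ℂ (unitVectorCurve 0 * star (unitVectorCurve 0)) := by
  intro h
  have : Infinite I := (Set.Icc_infinite zero_lt_one).to_subtype
  have hfin := finite_spectrum_of_isIntegral h
  rw [ContinuousMap.spectrum_eq_range] at hfin
  refine Set.infinite_range_of_injective (fun s t hst => ?_) hfin
  rw [unitVectorCurve_zero_mul_star_apply, unitVectorCurve_zero_mul_star_apply] at hst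
  exact Subtype.ext (Complex.ofReal_injective hst)

theorem exists_isStarProjection_not_isIntegral_mul_mul :
    ∃ (A : Type) (_ : CStarAlgebra A) (p q : A),
      IsStarProjection p ∧ IsStarProjection q ∧ ¬ IsIntegral ℂ (p * q * p) := by
  let φ := CStarMatrix.ofMatrixStarAlgEquiv (n := Fin 2) (A := C(I, ℂ))
  refine ⟨CStarMatrix (Fin 2) (Fin 2) C(I, ℂ), inferInstance,
    φ (single 0 0 1), φ (vecMulVec unitVectorCurve (star unitVectorCurve)),
    (isStarProjection_single_one 0).map φ,
    (isStarProjection_vecMulVec_star star_unitVectorCurve_dotProduct_self).map φ, fun h => ?_⟩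
  rw [← map_mul, ← map_mul, single_mul_mul_single, one_mul, mul_one, vecMulVec_apply] at h
  exact not_isIntegral_unitVectorCurve_zero_mul_star <|
    isIntegral_of_isIntegral_single <| by simpa using h.map φ.symm

/-- for every `n ≥ 4` there is a unital C*-algebra with an `n × n`
magic unitary whose entries do not all commute and generate an
infinite-dimensional C*-subalgebra. -/
theorem exists_noncommutative_magic_unitary (n : ℕ) (hn : 4 ≤ n) :
    Nonempty (NoncommutativeMagicUnitaryWitness n) := by
  obtain ⟨A, _, p, q, hp, hq, hpq⟩ := exists_isStarProjection_not_isIntegral_mul_mul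
  obtain ⟨u, hu, ⟨i, j, hij⟩, ⟨k, l, hkl⟩⟩ :=
    exists_isMagicUnitary_apply_eq (ι := Fin n) hp hq (by simpa using hn)
  let S := (StarAlgebra.adjoin ℂ {x : A | ∃ i j, x = u i j}).topologicalClosure
  have hmem (i j : Fin n) : u i j ∈ S :=
    StarSubalgebra.le_topologicalClosure _ (StarAlgebra.subset_adjoin ℂ _ ⟨i, j, rfl⟩)
  have hpS : p ∈ S := hij ▸ hmem i j
  have hqS : q ∈ S := hkl ▸ hmem k l
  exact ⟨{
    A := A
    u := u
    proj := fun i j =>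
      ⟨(hu.isStarProjection i j).isSelfAdjoint, (hu.isStarProjection i j).isIdempotentElem⟩
    rows := hu.sum_row
    cols := hu.sum_col
    noncomm := fun hcomm => not_commute_of_not_isIntegral_mul_mul hp.isIdempotentElem
      hq.isIdempotentElem hpq (hij ▸ hkl ▸ hcomm i j k l)
    infdim := fun _ => hpq (isIntegral_of_mem_of_finite S (mul_mem (mul_mem hpS hqS) hpS)) }⟩
end

section
/- Let n ≥ 4 and m ≥ 1 be integers. For each noncrossing partition π of {1,…,m}, define the vector ξ_π ∈ ℂ^{({1,…,n}^m)} by ξ_π(i_1,…,i_m) = 1 if the tuple (i_1,…,i_m) is constant on every block of π, and ξ_π(i_1,…,i_m) = 0 otherwise. Then the family of vectors {ξ_π : π a noncrossing partition of {1,…,m}} is linearly independent over ℂ. -/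
/-- A partition of `{1, …, m}` (encoded as an equivalence relation on `Fin m`)
is noncrossing if there are no `a < b < c < d` with `a, c` in one block and
`b, d` in a different block. -/
def Setoid.IsNoncrossing {m : ℕ} (r : Setoid (Fin m)) : Prop :=
  ¬ ∃ a b c d : Fin m, a < b ∧ b < c ∧ c < d ∧
      r.r a c ∧ r.r b d ∧ ¬ r.r a b

/-!
Four values carry two bits. To a partition `q` attach the functional that averages over the tuples
whose second bit at `j` is the parity of the nesting depth of `j` in `q` and whose first bits `v`
are arbitrary, weighted by the sign `(-1) ^ ∑ v j`, the sum being over the endpoints `j` of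
non-singleton blocks of `q`. By orthogonality of characters its value at the vector of `r` is
nonzero exactly when the depth parity of `q` is constant on the blocks of `r` and every block of
`r` contains an even number of those endpoints. For noncrossing `r`, these conditions transfer
openings and closings of blocks between `r` and `q`, and at the first point where the two partitions
open or close blocks differently it is `r` that opens a block or keeps one open. Thus the matrix of
the functionals against the vectors is triangular for a lexicographic order, with powers of two on
the diagonal.
-/

open Finset

theorem linearIndependent_of_triangular {ι R M β : Type*} [Ring R] [NoZeroDivisors R]
    [AddCommGroup M] [Module R M] [PartialOrder β] {v : ι → M} (f : ι → M →ₗ[R] R) {c : ι → β}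
    (hc : Function.Injective c) (hdiag : ∀ i, f i (v i) ≠ 0)
    (htri : ∀ i j, f i (v j) ≠ 0 → c i ≤ c j) : LinearIndependent R v := by
  classical
  rw [linearIndependent_iff']
  intro s g hg
  by_contra! ⟨i₀, hi₀, hgi₀⟩
  obtain ⟨i, hi, hmax⟩ := exists_maximalFor c {j ∈ s | g j ≠ 0} ⟨i₀, by simp [hi₀, hgi₀]⟩
  obtain ⟨his, hgi⟩ := mem_filter.mp hi
  have off_diag : ∀ j ∈ s, j ≠ i → g j * f i (v j) = 0 := by
    intro j hj hji
    by_contra hne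
    have hle := htri i j (right_ne_zero_of_mul hne)
    exact hji (hc ((hmax (by simp [hj, left_ne_zero_of_mul hne]) hle).antisymm hle))
  have diag : g i * f i (v i) = 0 :=
    calc g i * f i (v i) = ∑ j ∈ s, g j * f i (v j) := (sum_eq_single_of_mem i his off_diag).symm
      _ = f i (∑ j ∈ s, g j • v j) := by simp
      _ = 0 := by rw [hg, map_zero]
  exact mul_ne_zero hgi (hdiag i) diag

namespace NoncrossingPartition

section Blocks

variable {ι : Type*} [LinearOrder ι] {r s : Setoid ι} {i j : ι}

/-- `j` is the first element of its block. -/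
def IsBlockMin (r : Setoid ι) (j : ι) : Prop := ∀ i, r i j → j ≤ i

/-- `j` is the last element of its block. -/
def IsBlockMax (r : Setoid ι) (j : ι) : Prop := ∀ i, r i j → i ≤ j

/-- `i` and `j` are neighbours, in this order, in a common block. -/
structure IsConsecutive (r : Setoid ι) (i j : ι) : Prop where
  lt : i < j
  rel : r i j
  not_rel : ∀ x ∈ Set.Ioo i j, ¬ r i x

theorem exists_isBlockMin [WellFoundedLT ι] (r : Setoid ι) (j : ι) :
    ∃ f, r f j ∧ IsBlockMin r f := by
  obtain ⟨f, hf, hmin⟩ := WellFounded.has_min wellFounded_lt {i | r i j} ⟨j, r.refl j⟩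
  exact ⟨f, hf, fun i hi => not_lt.mp (hmin i (r.trans hi hf))⟩

theorem exists_isBlockMax [WellFoundedGT ι] (r : Setoid ι) (j : ι) :
    ∃ l, r l j ∧ IsBlockMax r l := by
  obtain ⟨l, hl, hmax⟩ := WellFounded.has_min wellFounded_gt {i | r i j} ⟨j, r.refl j⟩
  exact ⟨l, hl, fun i hi => not_lt.mp (hmax i (r.trans hi hl))⟩

theorem IsBlockMin.eq_of_rel (hi : IsBlockMin r i) (hj : IsBlockMin r j) (h : r i j) : i = j :=
  (hi j (r.symm h)).antisymm (hj i h)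

theorem IsBlockMax.eq_of_rel (hi : IsBlockMax r i) (hj : IsBlockMax r j) (h : r i j) : i = j :=
  (hj i h).antisymm (hi j (r.symm h))

theorem IsConsecutive.not_isBlockMin (h : IsConsecutive r i j) : ¬ IsBlockMin r j :=
  fun hj => (hj i h.rel).not_gt h.lt

theorem IsConsecutive.not_isBlockMax (h : IsConsecutive r i j) : ¬ IsBlockMax r i :=
  fun hi => (hi j (r.symm h.rel)).not_gt h.lt

theorem exists_isConsecutive_left [WellFoundedGT ι] (hj : ¬ IsBlockMin r j) :
    ∃ i, IsConsecutive r i j := by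
  simp only [IsBlockMin, not_forall, not_le] at hj
  obtain ⟨x, hx, hxj⟩ := hj
  obtain ⟨i, ⟨hi, hij⟩, hmax⟩ :=
    WellFounded.has_min wellFounded_gt {i | r i j ∧ i < j} ⟨x, hx, hxj⟩
  exact ⟨i, hij, hi, fun y hy hiy => hmax y ⟨r.trans (r.symm hiy) hi, hy.2⟩ hy.1⟩

theorem exists_isConsecutive_right [WellFoundedLT ι] (hi : ¬ IsBlockMax r i) :
    ∃ j, IsConsecutive r i j := by
  simp only [IsBlockMax, not_forall, not_le] at hi
  obtain ⟨x, hx, hix⟩ := hi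
  obtain ⟨j, ⟨hj, hij⟩, hmin⟩ :=
    WellFounded.has_min wellFounded_lt {j | r i j ∧ i < j} ⟨x, r.symm hx, hix⟩
  exact ⟨j, hij, hj, fun y hy hiy => hmin y ⟨hiy, hy.1⟩ hy.2⟩

theorem le_of_isConsecutive [Finite ι] (h : ∀ i j, IsConsecutive r i j → s i j) : r ≤ s := by
  have rel_isBlockMin (j : ι) : ∀ f, IsBlockMin r f → r f j → s f j := by
    induction j using WellFoundedLT.induction with
    | ind j ih =>
      intro f hf hfj
      by_cases hj : IsBlockMin r j
      · rw [hf.eq_of_rel hj hfj]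
      · obtain ⟨i, hij⟩ := exists_isConsecutive_left hj
        exact s.trans (ih i hij.lt f hf (r.trans hfj (r.symm hij.rel))) (h i j hij)
  intro i j hij
  obtain ⟨f, hfi, hf⟩ := exists_isBlockMin r i
  exact s.trans (s.symm (rel_isBlockMin i f hf hfi)) (rel_isBlockMin j f hf (r.trans hfi hij))

end Blocks

section Parity

variable {ι : Type*} [LinearOrder ι]

open Classical in
/-- The indicator of the block minima, modulo two. -/
noncomputable def minIndicator (r : Setoid ι) (j : ι) : ZMod 2 := if IsBlockMin r j then 1 else 0

open Classical in
/-- The indicator of the block maxima, modulo two. -/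
noncomputable def maxIndicator (r : Setoid ι) (j : ι) : ZMod 2 := if IsBlockMax r j then 1 else 0

/-- The indicator, modulo two, of the endpoints of non-singleton blocks: the element of a singleton
is both a minimum and a maximum and counts twice. -/
noncomputable def endpointParity (r : Setoid ι) (j : ι) : ZMod 2 :=
  minIndicator r j + maxIndicator r j

/-- The parity of the nesting depth of `j`, the number of blocks whose convex hull contains `j`: it
counts the blocks that start at or before `j`, minus those that end before `j`. -/
noncomputable def depthParity [LocallyFiniteOrderBot ι] (r : Setoid ι) (j : ι) : ZMod 2 :=
  ∑ i ∈ Iio j, endpointParity r i + minIndicator r j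

theorem maxIndicator_eq_minIndicator_iff {q : Setoid ι} {i j : ι} :
    maxIndicator q i = minIndicator q j ↔ (IsBlockMax q i ↔ IsBlockMin q j) := by
  unfold maxIndicator minIndicator
  split_ifs <;> simp [*]

theorem sum_Iio_add_sum_Ico [LocallyFiniteOrder ι] [LocallyFiniteOrderBot ι] {M : Type*}
    [AddCommMonoid M] (a : ι → M) {i j : ι} (hij : i ≤ j) :
    ∑ x ∈ Iio i, a x + ∑ x ∈ Ico i j, a x = ∑ x ∈ Iio j, a x := by
  have hdisj : Disjoint (Iio i) (Ico i j) :=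
    disjoint_left.mpr fun x hx hx' => (mem_Ico.mp hx').1.not_gt (mem_Iio.mp hx)
  rw [← sum_union hdisj]
  congr 1
  exact coe_injective (by simpa using Set.Iio_union_Ico_eq_Iio hij)

theorem depthParity_eq_iff_of_sum_Ioo [LocallyFiniteOrder ι] [LocallyFiniteOrderBot ι]
    {q : Setoid ι} {i j : ι} (hij : i < j) (hsum : ∑ x ∈ Ioo i j, endpointParity q x = 0) :
    depthParity q i = depthParity q j ↔ (IsBlockMax q i ↔ IsBlockMin q j) := by
  rw [← maxIndicator_eq_minIndicator_iff, depthParity, depthParity,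
    ← sum_Iio_add_sum_Ico _ hij.le, ← add_sum_Ioo_eq_sum_Ico hij, hsum, endpointParity]
  generalize ∑ x ∈ Iio i, endpointParity q x = b
  generalize minIndicator q i = c
  generalize maxIndicator q i = d
  generalize minIndicator q j = e
  revert b c d e
  decide

theorem depthParity_eq_iff_of_sum_Icc [LocallyFiniteOrder ι] [LocallyFiniteOrderBot ι]
    {q : Setoid ι} {i j : ι} (hij : i ≤ j) (hsum : ∑ x ∈ Icc i j, endpointParity q x = 0) :
    depthParity q i = depthParity q j ↔ (IsBlockMax q j ↔ IsBlockMin q i) := by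
  rw [← sum_Ico_add_eq_sum_Icc hij, endpointParity] at hsum
  rw [← maxIndicator_eq_minIndicator_iff, depthParity, depthParity, ← sum_Iio_add_sum_Ico _ hij]
  revert hsum
  generalize ∑ x ∈ Iio i, endpointParity q x = b
  generalize ∑ x ∈ Ico i j, endpointParity q x = c
  generalize minIndicator q i = d
  generalize minIndicator q j = e
  generalize maxIndicator q j = f
  revert b c d e f
  decide

theorem dotProduct_endpointParity_eq_zero [Fintype ι] (r : Setoid ι) {v : ι → ZMod 2}
    (hv : r ≤ Setoid.ker v) : v ⬝ᵥ endpointParity r = 0 := by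
  classical
  choose F hF hFmin using exists_isBlockMin r
  choose L hL hLmax using exists_isBlockMax r
  have sum_min_eq_sum_max : ∑ j with IsBlockMin r j, v j = ∑ j with IsBlockMax r j, v j := by
    refine sum_nbij' L F ?_ ?_ ?_ ?_ fun j _ => hv (r.symm (hL j))
    · simp [hLmax]
    · simp [hFmin]
    · exact fun j hj =>
        (hFmin _).eq_of_rel (mem_filter.mp hj).2 (r.trans (hF _) (hL j))
    · exact fun j hj =>
        (hLmax _).eq_of_rel (mem_filter.mp hj).2 (r.trans (hL _) (hF j))
  calc v ⬝ᵥ endpointParity r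
      = ∑ j with IsBlockMin r j, v j + ∑ j with IsBlockMax r j, v j := by
        simp [dotProduct, endpointParity, minIndicator, maxIndicator, mul_add, sum_add_distrib,
          sum_filter]
    _ = 0 := by rw [sum_min_eq_sum_max, CharTwo.add_self_eq_zero]

end Parity

theorem sum_eq_zero_of_dotProduct_eq_zero {ι R : Type*} [Fintype ι] [NonAssocSemiring R]
    {r : Setoid ι} {a : ι → R} (ha : ∀ v, r ≤ Setoid.ker v → v ⬝ᵥ a = 0) {S : Finset ι}
    (hS : r ≤ Setoid.ker (· ∈ S)) : ∑ i ∈ S, a i = 0 := by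
  classical
  have hker : r ≤ Setoid.ker fun i => if i ∈ S then (1 : R) else 0 := fun i j hij => by
    have hmem : (i ∈ S) = (j ∈ S) := hS hij
    simp [Setoid.ker_def, hmem]
  simpa [dotProduct] using ha _ hker

section Noncrossing

variable {m : ℕ} {r q : Setoid (Fin m)}

theorem mem_Ioo_of_rel (hr : r.IsNoncrossing) {f l x y : Fin m} (hfl : r f l) (hfx : ¬ r f x)
    (hxy : r x y) (hx : x ∈ Ioo f l) : y ∈ Ioo f l := by
  obtain ⟨hfx', hxl⟩ := mem_Ioo.mp hx
  have hfy : ¬ r f y := fun h => hfx (r.trans h (r.symm hxy))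
  have hyf : y ≠ f := fun h => hfy (h ▸ r.refl f)
  have hyl : y ≠ l := fun h => hfy (h ▸ hfl)
  rw [mem_Ioo]
  by_contra! hy
  rcases lt_or_gt_of_ne hyf with hlt | hgt
  · exact hr ⟨y, f, x, l, hlt, hfx', hxl, r.symm hxy, hfl, fun h => hfy (r.symm h)⟩
  · exact hr ⟨f, x, l, y, hfx', hxl, (hy hgt).lt_of_ne' hyl, hfl, hxy, hfx⟩

theorem IsConsecutive.le_ker_mem_Ioo (hr : r.IsNoncrossing) {i j : Fin m}
    (h : IsConsecutive r i j) : r ≤ Setoid.ker (· ∈ Ioo i j) := by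
  have mem_of_rel {x y : Fin m} (hxy : r x y) (hx : x ∈ Ioo i j) : y ∈ Ioo i j :=
    mem_Ioo_of_rel hr h.rel (h.not_rel x (by simpa using hx)) hxy hx
  exact fun x y hxy => propext ⟨mem_of_rel hxy, mem_of_rel (r.symm hxy)⟩

theorem le_ker_mem_Icc (hr : r.IsNoncrossing) {f l : Fin m} (hf : IsBlockMin r f)
    (hl : IsBlockMax r l) (hfl : r f l) : r ≤ Setoid.ker (· ∈ Icc f l) := by
  have mem_of_rel {x y : Fin m} (hxy : r x y) (hx : x ∈ Icc f l) : y ∈ Icc f l := by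
    by_cases hfx : r f x
    · have hyf : r y f := r.symm (r.trans hfx hxy)
      exact mem_Icc.mpr ⟨hf y hyf, hl y (r.trans hyf hfl)⟩
    · have hxf : f ≠ x := fun h => hfx (h ▸ r.refl f)
      have hxl : x ≠ l := fun h => hfx (h ▸ hfl)
      obtain ⟨hfx', hxl'⟩ := mem_Icc.mp hx
      exact Ioo_subset_Icc_self
        (mem_Ioo_of_rel hr hfl hfx hxy (mem_Ioo.mpr ⟨hfx'.lt_of_ne hxf, hxl'.lt_of_ne hxl⟩))
  exact fun x y hxy => propext ⟨mem_of_rel hxy, mem_of_rel (r.symm hxy)⟩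

theorem le_ker_depthParity (hr : r.IsNoncrossing) : r ≤ Setoid.ker (depthParity r) := by
  refine le_of_isConsecutive fun i j hij => ?_
  have hsum := sum_eq_zero_of_dotProduct_eq_zero (fun _ => dotProduct_endpointParity_eq_zero r)
    (hij.le_ker_mem_Ioo hr)
  exact (depthParity_eq_iff_of_sum_Ioo hij.lt hsum).mpr
    (iff_of_false hij.not_isBlockMax hij.not_isBlockMin)

end Noncrossing

section Compatible

/-- The condition under which the functional attached to `q` does not vanish on the vector of
`r`. -/
structure Compatible {ι : Type*} [LinearOrder ι] [LocallyFiniteOrderBot ι] [Fintype ι]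
    (r q : Setoid ι) : Prop where
  le_ker_depthParity : r ≤ Setoid.ker (depthParity q)
  dotProduct_eq_zero : ∀ v : ι → ZMod 2, r ≤ Setoid.ker v → v ⬝ᵥ endpointParity q = 0

variable {m : ℕ} {r q : Setoid (Fin m)}

theorem Compatible.refl (hr : r.IsNoncrossing) : Compatible r r :=
  ⟨NoncrossingPartition.le_ker_depthParity hr, fun _ => dotProduct_endpointParity_eq_zero r⟩

theorem Compatible.isBlockMax_iff_of_isConsecutive (h : Compatible r q) (hr : r.IsNoncrossing)
    {i j : Fin m} (hij : IsConsecutive r i j) : IsBlockMax q i ↔ IsBlockMin q j :=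
  (depthParity_eq_iff_of_sum_Ioo hij.lt <|
    sum_eq_zero_of_dotProduct_eq_zero h.dotProduct_eq_zero (hij.le_ker_mem_Ioo hr)).mp
    (h.le_ker_depthParity hij.rel)

theorem Compatible.isBlockMax_iff_of_isBlockMin (h : Compatible r q) (hr : r.IsNoncrossing)
    {f l : Fin m} (hf : IsBlockMin r f) (hl : IsBlockMax r l) (hfl : r f l) :
    IsBlockMax q l ↔ IsBlockMin q f :=
  (depthParity_eq_iff_of_sum_Icc (hl f hfl) <|
    sum_eq_zero_of_dotProduct_eq_zero h.dotProduct_eq_zero (le_ker_mem_Icc hr hf hl hfl)).mp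
    (h.le_ker_depthParity hfl)

end Compatible

section Code

/-- The code of a partition, recording at each point whether a block starts and whether a block
continues; codes are compared lexicographically, with `False < True`. -/
def code {ι : Type*} [LinearOrder ι] (r : Setoid ι) : Lex (ι → Prop ×ₗ Prop) :=
  toLex fun j => toLex (IsBlockMin r j, ¬ IsBlockMax r j)

theorem code_apply_eq_iff {ι : Type*} [LinearOrder ι] {r q : Setoid ι} {j : ι} :
    code r j = code q j ↔
      (IsBlockMin r j ↔ IsBlockMin q j) ∧ (IsBlockMax r j ↔ IsBlockMax q j) := by
  simp [code, not_iff_not]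

theorem code_apply_lt_iff {ι : Type*} [LinearOrder ι] {r q : Setoid ι} {j : ι} :
    code r j < code q j ↔ ¬ IsBlockMin r j ∧ IsBlockMin q j ∨
      (IsBlockMin r j ↔ IsBlockMin q j) ∧ IsBlockMax r j ∧ ¬ IsBlockMax q j := by
  simp only [code, Pi.toLex_apply, Prod.Lex.toLex_lt_toLex]
  simp only [lt_iff_le_not_ge, le_Prop_eq, eq_iff_iff]
  tauto

variable {m : ℕ} {r q : Setoid (Fin m)}

theorem le_of_isConsecutive_of_code_eq (hr : r.IsNoncrossing) (hcode : code r = code q)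
    {i i' j : Fin m} (hlt : ∀ y < j, ∀ x, IsConsecutive r x y → IsConsecutive q x y)
    (hi : IsConsecutive r i j) (hi' : IsConsecutive q i' j) : i' ≤ i := by
  by_contra! hii'
  have hmax : ¬ IsBlockMax r i' := by
    rw [(code_apply_eq_iff.mp (congrFun hcode i')).2]
    exact hi'.not_isBlockMax
  obtain ⟨z, hz⟩ := exists_isConsecutive_right hmax
  have hzj : z < j := (mem_Ioo.mp
    (((hi.le_ker_mem_Ioo hr) hz.rel).mp (mem_Ioo.mpr ⟨hii', hi'.lt⟩))).2
  exact hi'.not_rel z ⟨hz.lt, hzj⟩ (hlt z hzj i' hz).rel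

theorem isConsecutive_iff_of_code_eq (hr : r.IsNoncrossing) (hq : q.IsNoncrossing)
    (hcode : code r = code q) (j : Fin m) :
    ∀ i, IsConsecutive r i j ↔ IsConsecutive q i j := by
  induction j using WellFoundedLT.induction with
  | ind j ih =>
    have eq_of_isConsecutive {i i' : Fin m} (hi : IsConsecutive r i j)
        (hi' : IsConsecutive q i' j) : i = i' :=
      (le_of_isConsecutive_of_code_eq hq hcode.symm (fun y hy x => (ih y hy x).mpr) hi' hi).antisymm
        (le_of_isConsecutive_of_code_eq hr hcode (fun y hy x => (ih y hy x).mp) hi hi')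
    have hmin := (code_apply_eq_iff.mp (congrFun hcode j)).1
    intro i
    constructor <;> intro hi
    · obtain ⟨i', hi'⟩ := exists_isConsecutive_left (hmin.not.mp hi.not_isBlockMin)
      rwa [eq_of_isConsecutive hi hi']
    · obtain ⟨i', hi'⟩ := exists_isConsecutive_left (hmin.not.mpr hi.not_isBlockMin)
      rwa [← eq_of_isConsecutive hi' hi]

theorem code_injOn : Set.InjOn code {r : Setoid (Fin m) | r.IsNoncrossing} := by
  intro r hr q hq hcode
  have hiff := isConsecutive_iff_of_code_eq hr hq hcode
  exact le_antisymm (le_of_isConsecutive fun i j h => ((hiff j i).mp h).rel)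
    (le_of_isConsecutive fun i j h => ((hiff j i).mpr h).rel)

theorem Compatible.code_le (h : Compatible r q) (hr : r.IsNoncrossing) : code q ≤ code r := by
  by_contra! hlt
  obtain ⟨k, heq, hk⟩ := hlt
  have agree : ∀ j < k,
      (IsBlockMin r j ↔ IsBlockMin q j) ∧ (IsBlockMax r j ↔ IsBlockMax q j) :=
    fun j hj => code_apply_eq_iff.mp (heq j hj)
  rcases code_apply_lt_iff.mp hk with ⟨hrk, hqk⟩ | ⟨hmin, hrk, hqk⟩
  · obtain ⟨p, hp⟩ := exists_isConsecutive_left hrk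
    have hqp := (h.isBlockMax_iff_of_isConsecutive hr hp).mpr hqk
    exact hp.not_isBlockMax ((agree p hp.lt).2.mpr hqp)
  · obtain ⟨f, hfk, hf⟩ := exists_isBlockMin r k
    have hqf : IsBlockMin q f := by
      rcases (hrk f hfk).lt_or_eq with hlt | rfl
      · exact (agree f hlt).1.mp hf
      · exact hmin.mp hf
    exact hqk ((h.isBlockMax_iff_of_isBlockMin hr hf hrk hfk).mpr hqf)

end Code

section Functional

/-- The vector `ξ_r` of the partition `r`: the indicator of the tuples that are constant on the
blocks of `r`. -/
noncomputable def partitionVector {ι : Type*} (R α : Type*) [Zero R] [One R] (r : Setoid ι) :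
    (ι → α) → R :=
  Set.indicator {i | r ≤ Setoid.ker i} 1

theorem partitionVector_apply {ι R α : Type*} [Zero R] [One R] (r : Setoid ι) (i : ι → α)
    [Decidable (∀ x y, r x y → i x = i y)] :
    partitionVector R α r i = if ∀ x y, r x y → i x = i y then 1 else 0 := by
  classical
  exact (Set.indicator_apply ..).trans
    (if_congr ⟨fun h x y hxy => h hxy, fun h x y hxy => h x y hxy⟩ rfl rfl)

/-- The character `b ↦ (-1) ^ b` of `ZMod 2`. -/
def signChar (R : Type*) [CommRing R] : AddChar (ZMod 2) R := AddChar.zmodChar 2 neg_one_sq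

variable {ι R α : Type*} [Fintype ι] [CommRing R]

theorem signChar_eq_one_iff [NeZero (2 : R)] {b : ZMod 2} : signChar R b = 1 ↔ b = 0 := by
  have neg_one_ne_one : (-1 : R) ≠ 1 := fun h => two_ne_zero (α := R) (by linear_combination -h)
  obtain rfl | rfl : b = 0 ∨ b = 1 := by decide +revert
  · simp
  · simp [signChar, AddChar.zmodChar_apply, ZMod.val_one, neg_one_ne_one]

open Classical in
theorem sum_signChar_dotProduct [DecidableEq ι] [IsDomain R] [NeZero (2 : R)] (r : Setoid ι)
    (a : ι → ZMod 2) :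
    ∑ v : ι → ZMod 2 with r ≤ Setoid.ker v, signChar R (v ⬝ᵥ a) =
      if ∀ v, r ≤ Setoid.ker v → v ⬝ᵥ a = 0 then 2 ^ Fintype.card (Quotient r) else 0 := by
  let ψ : AddChar (Quotient r → ZMod 2) R :=
    { toFun w := signChar R ((w ∘ Quotient.mk r) ⬝ᵥ a)
      map_zero_eq_one' := by simp [Pi.zero_comp]
      map_add_eq_mul' w w' := by rw [Pi.add_comp, add_dotProduct, AddChar.map_add_eq_mul] }
  have hψ : ψ = 0 ↔ ∀ v, r ≤ Setoid.ker v → v ⬝ᵥ a = 0 := by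
    simp only [AddChar.eq_zero_iff, r.liftEquiv.symm.forall_congr_left, Subtype.forall]
    exact forall₂_congr fun v _ => signChar_eq_one_iff
  calc ∑ v : ι → ZMod 2 with r ≤ Setoid.ker v, signChar R (v ⬝ᵥ a)
      = ∑ v : {v : ι → ZMod 2 // r ≤ Setoid.ker v}, signChar R (v.1 ⬝ᵥ a) :=
        sum_subtype _ (by simp) _
    _ = ∑ w, ψ w := Fintype.sum_equiv r.liftEquiv _ _ fun v => rfl
    _ = _ := by rw [AddChar.sum_eq_ite]; simp [hψ]

variable [LinearOrder ι] [LocallyFiniteOrderBot ι]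

/-- The functional attached to `q`: the second bit of the tuples over which it sums is prescribed by
the depth in `q`, and the first bit is free and weighted by a character. -/
noncomputable def depthFunctional (R : Type*) [CommRing R] (φ : ZMod 2 × ZMod 2 ↪ α)
    (q : Setoid ι) : ((ι → α) → R) →ₗ[R] R :=
  ∑ v : ι → ZMod 2,
    signChar R (v ⬝ᵥ endpointParity q) • LinearMap.proj fun j => φ (v j, depthParity q j)

open Classical in
theorem depthFunctional_partitionVector [IsDomain R] [NeZero (2 : R)] (φ : ZMod 2 × ZMod 2 ↪ α)
    (r q : Setoid ι) :
    depthFunctional R φ q (partitionVector R α r) =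
      if Compatible r q then 2 ^ Fintype.card (Quotient r) else 0 := by
  have le_ker_iff (v : ι → ZMod 2) : (r ≤ Setoid.ker fun j => φ (v j, depthParity q j)) ↔
      r ≤ Setoid.ker v ∧ r ≤ Setoid.ker (depthParity q) := by
    simp [Setoid.le_def, Setoid.ker_def, φ.injective.eq_iff, forall_and]
  by_cases hdepth : r ≤ Setoid.ker (depthParity q)
  · have hcompat : Compatible r q ↔
        ∀ v, r ≤ Setoid.ker v → v ⬝ᵥ endpointParity q = 0 :=
      ⟨Compatible.dotProduct_eq_zero, Compatible.mk hdepth⟩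
    calc depthFunctional R φ q (partitionVector R α r)
        = ∑ v : ι → ZMod 2 with r ≤ Setoid.ker v, signChar R (v ⬝ᵥ endpointParity q) := by
          simp [depthFunctional, partitionVector, Set.indicator, le_ker_iff, hdepth, sum_filter]
      _ = if Compatible r q then 2 ^ Fintype.card (Quotient r) else 0 := by
          simp only [hcompat, sum_signChar_dotProduct]
  · rw [if_neg fun h => hdepth h.le_ker_depthParity]
    simp [depthFunctional, partitionVector, Set.indicator, le_ker_iff, hdepth]

theorem depthFunctional_partitionVector_ne_zero_iff [IsDomain R] [NeZero (2 : R)]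
    (φ : ZMod 2 × ZMod 2 ↪ α) {r q : Setoid ι} :
    depthFunctional R φ q (partitionVector R α r) ≠ 0 ↔ Compatible r q := by
  simp [depthFunctional_partitionVector, two_ne_zero]

end Functional

end NoncrossingPartition

open NoncrossingPartition

theorem noncrossing_partition_vectors_linearIndependent_general {R α : Type*} [CommRing R]
    [IsDomain R] [NeZero (2 : R)] (hα : 4 ≤ ENat.card α) (m : ℕ) :
    LinearIndependent R fun π : {r : Setoid (Fin m) // r.IsNoncrossing} =>
      partitionVector R α π.1 := by
  obtain ⟨φ⟩ : Nonempty (ZMod 2 × ZMod 2 ↪ α) := by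
    rw [← Cardinal.lift_mk_le']
    simpa [ENat.card] using hα
  refine linearIndependent_of_triangular (fun q => depthFunctional R φ q.1)
    (c := fun r => code r.1) ?_ ?_ ?_
  · exact fun r q h => Subtype.ext (code_injOn r.2 q.2 h)
  · exact fun r => (depthFunctional_partitionVector_ne_zero_iff φ).mpr (Compatible.refl r.2)
  · exact fun q r h => ((depthFunctional_partitionVector_ne_zero_iff φ).mp h).code_le r.2

open Classical in
/-- for `n ≥ 4`, the vectors `ξ_π ∈ ℂ^{({1,…,n}^m)}` associated to
noncrossing partitions `π` of `{1, …, m}` — where `ξ_π(i) = 1` if `i` is constant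
on every block of `π` and `0` otherwise — are linearly independent over `ℂ`. -/
theorem noncrossing_partition_vectors_linearIndependent (n m : ℕ) (hn : 4 ≤ n) (hm : 1 ≤ m) :
    LinearIndependent ℂ
      (fun (π : {r : Setoid (Fin m) // r.IsNoncrossing}) =>
        (fun i : Fin m → Fin n =>
          if ∀ x y : Fin m, π.1.r x y → i x = i y then (1 : ℂ) else 0)) := by
  have hα : 4 ≤ ENat.card (Fin n) := by simpa using mod_cast hn
  have h := noncrossing_partition_vectors_linearIndependent_general (R := ℂ) hα m
  simpa only [← partitionVector_apply] using h
end
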